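/- Assume (A) and (B) hold with p = 1, i.e., G has a unique non-degenerate global maximizer M = M_1 in the interior of Δ̂. Let ρ be the probability measure on {1,…,q} with ρ(l) = M_{1,l} for l = 1,…,q. Then there exists a constant c > 0 such that for all N and all 1 ≤ k ≤ N, the k-marginal μ_N^{(k)} (the distribution of (σ_1,…,σ_k) under μ_N) satisfies H(μ_N^{(k)} | ρ^{⊗k}) ≤ c k / N. -/

import Mathlib

/-!
Relative entropy with respect to a product measure is superadditive over disjoint blocks of
coordinates. As `μ_N` is exchangeable, its `⌊N / k⌋` disjoint blocks of length `k` all have law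
`μ_N^{(k)}`, hence `H(μ_N^{(k)} | ρ^{⊗k}) ≤ 2 (k / N) H(μ_N | ρ^{⊗N})`, and it suffices to bound
`H(μ_N | ρ^{⊗N})` uniformly in `N`.

Writing `m` for the magnetization, `μ_N` is the tilt of `ρ^{⊗N}` by `exp (N φ(m))`, where
`φ(m) = G(m) - G(ρ) + H(m | ρ)`. As the maximum of `G` at `ρ` is nondegenerate, `G(ρ) - G(m)`
dominates a multiple of `H(m | ρ)`, so `φ ≤ (1 - c) H(· | ρ)`; moreover, `φ` exceeds a linear
function vanishing at `ρ` up to a quadratic error. By Jensen's inequality the relative entropy of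
the tilt is then controlled by the exponential moments `E exp (r N H(m | ρ))`, `r < 1`, under
`ρ^{⊗N}`.

These moments are bounded without Stirling's formula. By AM-GM, `ρ^{1-s} m^s ≤ (1 - s) ρ + s m`
for some `s ∈ (r, 1)`, so on a cell of the simplex of side `N^{-1/2}` the integrand is at most a
probability density times a factor decaying exponentially in the rescaled distance from the cell
to `ρ`. The sum over the cells is therefore bounded uniformly in `N`.
-/

open Filter Real MeasureTheory

/-- Relative entropy (Kullback–Leibler divergence) between two probability mass
functions on a finite set. -/
noncomputable def relEnt {α : Type*} [Fintype α] (rho pion : α → ℝ) : ℝ :=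
  ∑ x, rho x * Real.log (rho x / pion x)

section RelativeEntropy

variable {Ω : Type*} [Fintype Ω]

lemma sub_le_mul_log_div {x y : ℝ} (hx : 0 ≤ x) (hy : 0 ≤ y) (hxy : y = 0 → x = 0) :
    x - y ≤ x * log (x / y) := by
  rcases hx.eq_or_lt with rfl | hx
  · simpa using hy
  have hy : 0 < y := hy.lt_of_ne' fun h => hx.ne' (hxy h)
  calc x - y = x * (1 - (x / y)⁻¹) := by field_simp
    _ ≤ x * log (x / y) := by gcongr; exact one_sub_inv_le_log_of_pos (div_pos hx hy)

lemma relEnt_nonneg {P Q : Ω → ℝ} (hP : ∀ x, 0 ≤ P x) (hQ : ∀ x, 0 ≤ Q x)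
    (hPQ : ∀ x, Q x = 0 → P x = 0) (hsum : ∑ x, Q x ≤ ∑ x, P x) : 0 ≤ relEnt P Q :=
  calc 0 ≤ ∑ x, (P x - Q x) := by rw [Finset.sum_sub_distrib]; linarith
    _ ≤ relEnt P Q := Finset.sum_le_sum fun x _ => sub_le_mul_log_div (hP x) (hQ x) (hPQ x)

lemma relEnt_nonneg_of_pos {P Q : Ω → ℝ} (hP : P ∈ stdSimplex ℝ Ω) (hQ : ∀ x, 0 < Q x)
    (hQ₁ : ∑ x, Q x = 1) : 0 ≤ relEnt P Q :=
  relEnt_nonneg hP.1 (fun x => (hQ x).le) (fun x h => absurd h (hQ x).ne') (hQ₁.trans hP.2.symm).le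

lemma sum_mul_log_le_relEnt {P R h : Ω → ℝ} (hP : ∀ x, 0 ≤ P x) (hR : ∀ x, 0 < R x)
    (hh : ∀ x, 0 ≤ h x) (hPh : ∀ x, h x = 0 → P x = 0) (hsum : ∑ x, R x * h x ≤ ∑ x, P x) :
    ∑ x, P x * log (h x) ≤ relEnt P R := by
  have hnonneg : 0 ≤ relEnt P fun x => R x * h x :=
    relEnt_nonneg hP (fun x => mul_nonneg (hR x).le (hh x))
      (fun x hx => hPh x ((mul_eq_zero.1 hx).resolve_left (hR x).ne')) hsum
  have hpoint : ∀ x, P x * log (P x / (R x * h x)) = P x * log (P x / R x) - P x * log (h x) :=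
    fun x => by
      rcases eq_or_ne (P x) 0 with hx | hx
      · simp [hx]
      · rw [← div_div, log_div (div_ne_zero hx (hR x).ne') (mt (hPh x) hx), mul_sub]
  rw [relEnt, Finset.sum_congr rfl fun x _ => hpoint x, Finset.sum_sub_distrib] at hnonneg
  exact sub_nonneg.1 hnonneg

lemma relEnt_le_sum_sq_div {m ρ : Ω → ℝ} (hm : m ∈ stdSimplex ℝ Ω) (hρ : ∀ k, 0 < ρ k)
    (hρ₁ : ∑ k, ρ k = 1) : relEnt m ρ ≤ ∑ k, (m k - ρ k) ^ 2 / ρ k := by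
  have hpoint : ∀ k, m k * log (m k / ρ k) ≤ (m k - ρ k) ^ 2 / ρ k + (m k - ρ k) := fun k => by
    rcases (hm.1 k).eq_or_lt with h | h
    · simpa [← h] using (pow_two (ρ k) ▸ mul_self_div_self (ρ k)).ge
    calc m k * log (m k / ρ k) ≤ m k * (m k / ρ k - 1) := by
          gcongr
          exact log_le_sub_one_of_pos (div_pos h (hρ k))
      _ = (m k - ρ k) ^ 2 / ρ k + (m k - ρ k) := by
          have := (hρ k).ne'
          field_simp
          ring
  calc relEnt m ρ ≤ ∑ k, ((m k - ρ k) ^ 2 / ρ k + (m k - ρ k)) :=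
        Finset.sum_le_sum fun k _ => hpoint k
    _ = ∑ k, (m k - ρ k) ^ 2 / ρ k := by
        rw [Finset.sum_add_distrib, Finset.sum_sub_distrib, hm.2, hρ₁, sub_self, add_zero]

lemma sq_sub_div_four_le_mul_log_div {x y : ℝ} (hx₀ : 0 ≤ x) (hx₁ : x ≤ 1) (hy₀ : 0 < y)
    (hy₁ : y ≤ 1) : (x - y) ^ 2 / 4 ≤ x * log (x / y) - x + y := by
  rcases hx₀.eq_or_lt with rfl | hx₀
  · norm_num
    nlinarith
  have hlog : √x * (√x - √y) ≤ x * log (√x / √y) := by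
    have := one_sub_inv_le_log_of_pos (div_pos (sqrt_pos.2 hx₀) (sqrt_pos.2 hy₀))
    calc √x * (√x - √y) = x * (1 - (√x / √y)⁻¹) := by
          have := (sqrt_pos.2 hx₀).ne'
          have hsq := sq_sqrt hx₀.le
          field_simp
          rw [hsq, mul_comm]
      _ ≤ x * log (√x / √y) := by gcongr
  have hhalf : log (x / y) = 2 * log (√x / √y) := by
    rw [← sqrt_div hx₀.le, log_sqrt (div_pos hx₀ hy₀).le]
    ring
  have hsum : √x + √y ≤ 2 := by linarith [sqrt_le_one.2 hx₁, sqrt_le_one.2 hy₁]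
  calc (x - y) ^ 2 / 4 = (√x - √y) ^ 2 * ((√x + √y) / 2) ^ 2 := by
        nth_rw 1 [← sq_sqrt hx₀.le, ← sq_sqrt hy₀.le]
        ring
    _ ≤ (√x - √y) ^ 2 * 1 := by
        gcongr
        exact pow_le_one₀ (by positivity) (by linarith)
    _ = 2 * (√x * (√x - √y)) - x + y := by
        rw [mul_one, sub_sq, mul_sub, ← sq, sq_sqrt hx₀.le, sq_sqrt hy₀.le]
        ring
    _ ≤ x * log (x / y) - x + y := by rw [hhalf]; linarith

lemma sum_sq_sub_le_relEnt {m ρ : Ω → ℝ} (hm : m ∈ stdSimplex ℝ Ω) (hρ : ∀ k, 0 < ρ k)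
    (hρ₁ : ∑ k, ρ k = 1) : ∑ k, (m k - ρ k) ^ 2 ≤ 4 * relEnt m ρ := by
  have hle : ∀ {θ : Ω → ℝ}, (∀ k, 0 ≤ θ k) → ∑ k, θ k = 1 → ∀ k, θ k ≤ 1 := fun hθ hθ₁ k =>
    hθ₁ ▸ Finset.single_le_sum (fun i _ => hθ i) (Finset.mem_univ k)
  have hsum : ∑ k, (m k - ρ k) ^ 2 / 4 ≤ ∑ k, (m k * log (m k / ρ k) - m k + ρ k) :=
    Finset.sum_le_sum fun k _ => sq_sub_div_four_le_mul_log_div (hm.1 k) (hle hm.1 hm.2 k)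
      (hρ k) (hle (fun k => (hρ k).le) hρ₁ k)
  rw [← Finset.sum_div, Finset.sum_add_distrib, Finset.sum_sub_distrib, hm.2, hρ₁] at hsum
  simp only [relEnt]
  linarith

lemma exp_sum_mul_le_sum_mul_exp {P : Ω → ℝ} (hP : P ∈ stdSimplex ℝ Ω) (g : Ω → ℝ) :
    exp (∑ x, P x * g x) ≤ ∑ x, P x * exp (g x) := by
  simpa using convexOn_exp.map_sum_le (p := g) (fun x _ => hP.1 x) hP.2 fun x _ => Set.mem_univ _

lemma sum_mul_exp_pos {P : Ω → ℝ} (hP : P ∈ stdSimplex ℝ Ω) (g : Ω → ℝ) :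
    0 < ∑ x, P x * exp (g x) :=
  (exp_pos _).trans_le (exp_sum_mul_le_sum_mul_exp hP g)

lemma sum_mul_le_log_sum_mul_exp {P : Ω → ℝ} (hP : P ∈ stdSimplex ℝ Ω) (g : Ω → ℝ) :
    ∑ x, P x * g x ≤ log (∑ x, P x * exp (g x)) :=
  (le_log_iff_exp_le (sum_mul_exp_pos hP g)).2 (exp_sum_mul_le_sum_mul_exp hP g)

lemma relEnt_tilt_le {P Q Φ : Ω → ℝ} {l : ℝ} (hP : P ∈ stdSimplex ℝ Ω) (hl : 0 < l)
    (hQ : ∀ x, Q x = P x * exp (Φ x) / ∑ y, P y * exp (Φ y)) :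
    relEnt Q P ≤ 1 / l * log (∑ x, P x * exp ((1 + l) * Φ x)) -
      (1 + 1 / l) * ∑ x, P x * Φ x := by
  set Z := ∑ y, P y * exp (Φ y)
  have hZpos : 0 < Z := sum_mul_exp_pos hP Φ
  have hQmem : Q ∈ stdSimplex ℝ Ω :=
    ⟨fun x => by rw [hQ]; exact div_nonneg (mul_nonneg (hP.1 x) (exp_pos _).le) hZpos.le, by
      simp only [hQ, ← Finset.sum_div]; exact div_self hZpos.ne'⟩
  have hpoint : ∀ x, Q x * log (Q x / P x) = Q x * Φ x - Q x * log Z := fun x => by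
    rcases eq_or_ne (P x) 0 with h | h
    · simp [hQ, h]
    have hratio : Q x / P x = exp (Φ x) / Z := by rw [hQ]; field_simp
    rw [hratio, log_div (exp_pos _).ne' hZpos.ne', log_exp, mul_sub]
  have hrel : relEnt Q P = ∑ x, Q x * Φ x - log Z := by
    rw [relEnt, Finset.sum_congr rfl fun x _ => hpoint x, Finset.sum_sub_distrib,
      ← Finset.sum_mul, hQmem.2, one_mul]
  have hQtilt : ∑ x, Q x * exp (l * Φ x) = (∑ x, P x * exp ((1 + l) * Φ x)) / Z := by
    rw [Finset.sum_div]
    refine Finset.sum_congr rfl fun x _ => ?_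
    rw [hQ, one_add_mul, exp_add]
    ring
  have hmean : l * ∑ x, Q x * Φ x ≤ log (∑ x, P x * exp ((1 + l) * Φ x)) - log Z := by
    rw [← log_div (sum_mul_exp_pos hP _).ne' hZpos.ne', ← hQtilt, Finset.mul_sum]
    simpa only [mul_left_comm] using sum_mul_le_log_sum_mul_exp hQmem fun x => l * Φ x
  have hlogZ : ∑ x, P x * Φ x ≤ log Z := sum_mul_le_log_sum_mul_exp hP Φ
  calc relEnt Q P = 1 / l * (l * ∑ x, Q x * Φ x) - log Z := by rw [hrel]; field_simp
    _ ≤ 1 / l * (log (∑ x, P x * exp ((1 + l) * Φ x)) - log Z) - log Z := by gcongr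
    _ = 1 / l * log (∑ x, P x * exp ((1 + l) * Φ x)) - (1 + 1 / l) * log Z := by ring
    _ ≤ _ := by gcongr

end RelativeEntropy

section Marginals

variable {A β ι κ : Type*} [Fintype A] [Fintype ι] [DecidableEq ι]

open Classical in
/-- The joint law of the coordinates `σ (e j)`, `j : κ`, under the mass function `P` on
configurations `σ : ι → A`. -/
noncomputable def marginal (e : κ → ι) (P : (ι → A) → ℝ) : (κ → A) → ℝ :=
  fun τ => ∑ σ with σ ∘ e = τ, P σ

lemma marginal_apply (e : κ → ι) (P : (ι → A) → ℝ) (τ : κ → A)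
    [DecidablePred fun σ : ι → A => ∀ j, σ (e j) = τ j] :
    marginal e P τ = ∑ σ : ι → A, if ∀ j, σ (e j) = τ j then P σ else 0 := by
  simp [marginal, Finset.sum_filter, funext_iff]

lemma prod_mem_stdSimplex {ρ : A → ℝ} (hρ : ρ ∈ stdSimplex ℝ A) :
    (fun σ : ι → A => ∏ i, ρ (σ i)) ∈ stdSimplex ℝ (ι → A) :=
  ⟨fun σ => Finset.prod_nonneg fun i _ => hρ.1 (σ i), by
    rw [← Fintype.prod_sum fun _ a => ρ a]; simp [hρ.2]⟩

lemma le_marginal (e : κ → ι) {P : (ι → A) → ℝ} (hP : ∀ σ, 0 ≤ P σ) (σ : ι → A) :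
    P σ ≤ marginal e P (σ ∘ e) :=
  Finset.single_le_sum (fun σ _ => hP σ) (by simp)

lemma marginal_prod {ρ : A → ℝ} (hρ₁ : ∑ a, ρ a = 1) [Fintype κ] {e : κ → ι} (he : e.Injective) :
    marginal e (fun σ => ∏ i, ρ (σ i)) = fun τ => ∏ j, ρ (τ j) := by
  classical
  funext τ
  let t : ι → Finset A := fun i => {a | ∀ j, e j = i → a = τ j}
  have hfiber : ∀ σ : ι → A, σ ∘ e = τ ↔ σ ∈ Fintype.piFinset t := fun σ => by
    simp only [Finset.mem_filter_univ, funext_iff, Function.comp_apply, Fintype.mem_piFinset, t]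
    exact ⟨fun h i j hj => hj ▸ h j, fun h j => h (e j) j rfl⟩
  have hrange : ∀ j, t (e j) = {τ j} := fun j => by
    ext a
    simp only [t, Finset.mem_filter_univ, Finset.mem_singleton]
    exact ⟨fun h => h j rfl, fun h j' hj' => he hj' ▸ h⟩
  have hcompl : ∀ i ∉ Set.range e, t i = Finset.univ := fun i hi =>
    Finset.filter_true_of_mem fun a _ j hj => absurd ⟨j, hj⟩ hi
  simp only [marginal, hfiber, Finset.filter_univ_mem]
  rw [← Finset.prod_univ_sum t fun _ a => ρ a]
  refine (Fintype.prod_of_injective e he _ _ (fun i hi => ?_) fun j => ?_).symm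
  · rw [hcompl i hi, hρ₁]
  · rw [hrange, Finset.sum_singleton]

lemma marginal_eq_of_exchangeable {P : (ι → A) → ℝ}
    (hP : ∀ (g : Equiv.Perm ι) (σ : ι → A), P (σ ∘ g) = P σ) [Finite κ] {e e' : κ → ι}
    (he : e.Injective) (he' : e'.Injective) : marginal e P = marginal e' P := by
  obtain ⟨g, hg⟩ := Equiv.Perm.exists_extending_pair e' e he' he
  funext τ
  refine Finset.sum_equiv (g.symm.arrowCongr (Equiv.refl A)) (fun σ => ?_) fun σ _ => (hP g σ).symm
  simp [funext_iff, hg]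

variable [Fintype κ] [DecidableEq κ]

lemma sum_marginal_mul (e : κ → ι) (P : (ι → A) → ℝ) (h : (κ → A) → ℝ) :
    ∑ τ, marginal e P τ * h τ = ∑ σ, P σ * h (σ ∘ e) := by
  classical
  rw [← Finset.sum_fiberwise Finset.univ fun σ : ι → A => σ ∘ e]
  refine Finset.sum_congr rfl fun τ _ => ?_
  rw [marginal, Finset.sum_mul]
  exact Finset.sum_congr (by congr!) fun σ hσ => by rw [(Finset.mem_filter.1 hσ).2]

lemma marginal_mem_stdSimplex (e : κ → ι) {P : (ι → A) → ℝ} (hP : P ∈ stdSimplex ℝ (ι → A)) :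
    marginal e P ∈ stdSimplex ℝ (κ → A) :=
  ⟨fun _ => Finset.sum_nonneg fun σ _ => hP.1 σ,
    by simpa [hP.2] using sum_marginal_mul e P fun _ => 1⟩

lemma sum_prod_mul_comp {ρ : A → ℝ} (hρ₁ : ∑ a, ρ a = 1) {e : κ → ι} (he : e.Injective)
    (h : (κ → A) → ℝ) :
    ∑ σ : ι → A, (∏ i, ρ (σ i)) * h (σ ∘ e) = ∑ τ : κ → A, (∏ j, ρ (τ j)) * h τ := by
  rw [← sum_marginal_mul, marginal_prod hρ₁ he]

variable [Fintype β]

lemma sum_prod_mul_prod_blocks {ρ : A → ℝ} (hρ₁ : ∑ a, ρ a = 1) {e : β × κ → ι}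
    (he : e.Injective) (h : β → (κ → A) → ℝ) :
    ∑ σ : ι → A, (∏ i, ρ (σ i)) * ∏ b, h b (fun j => σ (e (b, j))) =
      ∏ b, ∑ τ : κ → A, (∏ j, ρ (τ j)) * h b τ := by
  classical
  calc _ = ∑ τ : β × κ → A, (∏ x, ρ (τ x)) * ∏ b, h b (fun j => τ (b, j)) :=
        sum_prod_mul_comp hρ₁ he fun τ => ∏ b, h b (fun j => τ (b, j))
    _ = ∑ τ : β → κ → A, ∏ b, ((∏ j, ρ (τ b j)) * h b (τ b)) :=
        Fintype.sum_equiv (Equiv.curry β κ A) _ _ fun τ => by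
          rw [Fintype.prod_prod_type, ← Finset.prod_mul_distrib]
          rfl
    _ = _ := (Fintype.prod_sum fun b τ => (∏ j, ρ (τ j)) * h b τ).symm

lemma sum_relEnt_marginal_le {P : (ι → A) → ℝ} (hP : P ∈ stdSimplex ℝ (ι → A)) {ρ : A → ℝ}
    (hρ : ∀ a, 0 < ρ a) (hρ₁ : ∑ a, ρ a = 1) {e : β × κ → ι} (he : e.Injective) :
    ∑ b, relEnt (marginal (fun j => e (b, j)) P) (fun τ => ∏ j, ρ (τ j)) ≤
      relEnt P (fun σ => ∏ i, ρ (σ i)) := by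
  let h : β → (κ → A) → ℝ := fun b τ => marginal (fun j => e (b, j)) P τ / ∏ j, ρ (τ j)
  have hκ : ∀ τ : κ → A, 0 < ∏ j, ρ (τ j) := fun τ => Finset.prod_pos fun j _ => hρ (τ j)
  have hmarg : ∀ b, marginal (fun j => e (b, j)) P ∈ stdSimplex ℝ (κ → A) := fun b =>
    marginal_mem_stdSimplex _ hP
  have hh : ∀ b τ, 0 ≤ h b τ := fun b τ => div_nonneg ((hmarg b).1 τ) (hκ τ).le
  have hpos : ∀ σ, P σ ≠ 0 → ∀ b, h b (fun j => σ (e (b, j))) ≠ 0 := fun σ hσ b =>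
    div_ne_zero (((hP.1 σ).lt_of_ne' hσ).trans_le (le_marginal _ hP.1 σ)).ne' (hκ _).ne'
  have hmass : ∑ σ : ι → A, (∏ i, ρ (σ i)) * ∏ b, h b (fun j => σ (e (b, j))) = 1 := by
    rw [sum_prod_mul_prod_blocks hρ₁ he]
    refine Finset.prod_eq_one fun b _ => ?_
    simp only [h, mul_div_cancel₀ _ (hκ _).ne', (hmarg b).2]
  have hlog : ∀ σ, P σ * log (∏ b, h b (fun j => σ (e (b, j)))) =
      ∑ b, P σ * log (h b (fun j => σ (e (b, j)))) := fun σ => by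
    rcases eq_or_ne (P σ) 0 with hσ | hσ
    · simp [hσ]
    · rw [log_prod fun b _ => hpos σ hσ b, Finset.mul_sum]
  calc _ = ∑ b, ∑ σ, P σ * log (h b (fun j => σ (e (b, j)))) :=
        Finset.sum_congr rfl fun b _ => sum_marginal_mul _ P fun τ => log (h b τ)
    _ = ∑ σ, P σ * log (∏ b, h b (fun j => σ (e (b, j)))) := by
        rw [Finset.sum_comm]
        exact Finset.sum_congr rfl fun σ _ => (hlog σ).symm
    _ ≤ _ := by
        refine sum_mul_log_le_relEnt hP.1 (fun σ => Finset.prod_pos fun i _ => hρ (σ i))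
          (fun σ => Finset.prod_nonneg fun b _ => hh b _) (fun σ hσ => ?_)
          (hmass.trans hP.2.symm).le
        by_contra hPσ
        exact Finset.prod_ne_zero_iff.2 (fun b _ => hpos σ hPσ b) hσ

lemma card_mul_relEnt_marginal_le {P : (ι → A) → ℝ} (hP : P ∈ stdSimplex ℝ (ι → A))
    (hPexch : ∀ (g : Equiv.Perm ι) (σ : ι → A), P (σ ∘ g) = P σ) {ρ : A → ℝ}
    (hρ : ∀ a, 0 < ρ a) (hρ₁ : ∑ a, ρ a = 1) {e : β × κ → ι} (he : e.Injective) {e₀ : κ → ι}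
    (he₀ : e₀.Injective) :
    Fintype.card β * relEnt (marginal e₀ P) (fun τ => ∏ j, ρ (τ j)) ≤
      relEnt P (fun σ => ∏ i, ρ (σ i)) := by
  have hblock : ∀ b, marginal e₀ P = marginal (fun j => e (b, j)) P := fun b =>
    marginal_eq_of_exchangeable hPexch he₀ (he.comp (Prod.mk_right_injective b))
  calc _ = ∑ b : β, relEnt (marginal (fun j => e (b, j)) P) (fun τ => ∏ j, ρ (τ j)) := by
        simp [← hblock]
    _ ≤ _ := sum_relEnt_marginal_le hP hρ hρ₁ he

lemma relEnt_marginal_castLE_le {N k : ℕ} (hk₀ : 1 ≤ k) (hk : k ≤ N) {P : (Fin N → A) → ℝ}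
    (hP : P ∈ stdSimplex ℝ (Fin N → A))
    (hPexch : ∀ (g : Equiv.Perm (Fin N)) (σ : Fin N → A), P (σ ∘ g) = P σ) {ρ : A → ℝ}
    (hρ : ∀ a, 0 < ρ a) (hρ₁ : ∑ a, ρ a = 1) :
    relEnt (marginal (Fin.castLE hk) P) (fun τ => ∏ j, ρ (τ j)) ≤
      2 * (k / N) * relEnt P (fun σ => ∏ i, ρ (σ i)) := by
  let e : Fin (N / k) × Fin k → Fin N := Fin.castLE (Nat.div_mul_le_self N k) ∘ finProdFinEquiv
  have he : e.Injective := (Fin.castLE_injective _).comp finProdFinEquiv.injective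
  have hblocks := card_mul_relEnt_marginal_le hP hPexch hρ hρ₁ he (Fin.castLE_injective hk)
  set R := relEnt (marginal (Fin.castLE hk) P) (fun τ => ∏ j, ρ (τ j))
  have hR : 0 ≤ R := relEnt_nonneg_of_pos (marginal_mem_stdSimplex _ hP)
    (fun τ => Finset.prod_pos fun j _ => hρ (τ j))
    (prod_mem_stdSimplex ⟨fun a => (hρ a).le, hρ₁⟩).2
  have hNk : (N : ℝ) ≤ 2 * k * ((N / k : ℕ) : ℝ) := by
    have h := Nat.lt_div_mul_add (a := N) hk₀
    have h' : 1 ≤ N / k := Nat.div_pos hk hk₀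
    exact_mod_cast (by nlinarith : N ≤ 2 * k * (N / k))
  have hN : (0 : ℝ) < N := by exact_mod_cast hk₀.trans hk
  rw [Fintype.card_fin] at hblocks
  rw [← mul_le_mul_iff_right₀ hN]
  calc (N : ℝ) * R ≤ 2 * k * ((N / k : ℕ) : ℝ) * R := by gcongr
    _ ≤ 2 * k * relEnt P (fun σ => ∏ i, ρ (σ i)) := by rw [mul_assoc]; gcongr
    _ = _ := by field_simp

end Marginals

section Empirical

variable {A : Type*} [DecidableEq A] {N : ℕ}

/-- The empirical measure (magnetization) of a configuration of `N` spins with values in `A`. -/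
noncomputable def empirical (σ : Fin N → A) : A → ℝ :=
  fun a => ((Finset.univ.filter fun i => σ i = a).card : ℝ) / N

lemma empirical_apply_pos (σ : Fin N → A) (i : Fin N) : 0 < empirical σ (σ i) := by
  have hcard : 0 < (Finset.univ.filter fun j => σ j = σ i).card :=
    Finset.card_pos.2 ⟨i, by simp⟩
  have hN : 0 < N := i.pos
  unfold empirical
  positivity

lemma empirical_comp_perm (g : Equiv.Perm (Fin N)) (σ : Fin N → A) :
    empirical (σ ∘ g) = empirical σ := by
  funext a
  unfold empirical
  congr 2
  exact Finset.card_equiv g (by simp)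

variable [Fintype A]

lemma sum_comp_eq_mul_sum_empirical (σ : Fin N → A) (g : A → ℝ) :
    ∑ i, g (σ i) = N * ∑ a, empirical σ a * g a := by
  rcases eq_or_ne N 0 with rfl | hN
  · simp
  rw [← Finset.sum_fiberwise Finset.univ σ, Finset.mul_sum]
  refine Finset.sum_congr rfl fun a _ => ?_
  rw [Finset.sum_congr rfl fun i hi => by rw [(Finset.mem_filter.1 hi).2], Finset.sum_const,
    nsmul_eq_mul, empirical]
  field_simp

lemma prod_exp_comp (σ : Fin N → A) (g : A → ℝ) :
    ∏ i, exp (g (σ i)) = exp (N * ∑ a, empirical σ a * g a) := by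
  rw [← exp_sum, sum_comp_eq_mul_sum_empirical]

lemma empirical_mem_stdSimplex (hN : N ≠ 0) (σ : Fin N → A) : empirical σ ∈ stdSimplex ℝ A := by
  refine ⟨fun a => by unfold empirical; positivity, ?_⟩
  have h := sum_comp_eq_mul_sum_empirical σ fun _ => 1
  simp only [mul_one, Finset.sum_const, Finset.card_univ, Fintype.card_fin, nsmul_eq_mul] at h
  exact (mul_right_eq_self₀.1 h.symm).resolve_right (by exact_mod_cast hN)

end Empirical

section ExponentialMoment

lemma abs_floor_sub_le (x y : ℝ) : |⌊x⌋ - y| ≤ |x - y| + 1 := by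
  have hfloor : |⌊x⌋ - x| ≤ 1 := by
    rw [abs_sub_comm, Int.self_sub_floor, Int.abs_fract]
    exact (Int.fract_lt_one x).le
  linarith [abs_sub_le (⌊x⌋ : ℝ) x y]

lemma exists_sum_exp_neg_abs_sub_le :
    ∃ S : ℝ, ∀ (t : Finset ℤ) (b : ℝ), ∑ z ∈ t, exp (-|z - b|) ≤ S := by
  have hsum : Summable fun z : ℤ => exp (-|(z : ℝ)|) :=
    .of_nat_of_neg (by simpa using summable_exp_neg_nat) (by simpa using summable_exp_neg_nat)
  refine ⟨exp 1 * ∑' z : ℤ, exp (-|(z : ℝ)|), fun t b => ?_⟩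
  have hfloor : ∀ z : ℤ, |((z - ⌊b⌋ : ℤ) : ℝ)| ≤ |z - b| + 1 := fun z => by
    rw [Int.cast_sub, abs_sub_comm, abs_sub_comm (z : ℝ)]
    exact abs_floor_sub_le b z
  calc ∑ z ∈ t, exp (-|z - b|) ≤ ∑ z ∈ t, exp 1 * exp (-|((z - ⌊b⌋ : ℤ) : ℝ)|) := by
        gcongr with z
        rw [← exp_add]
        gcongr
        linarith [hfloor z]
    _ = exp 1 * ∑ z ∈ t.map (Equiv.subRight ⌊b⌋).toEmbedding, exp (-|(z : ℝ)|) := by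
        rw [Finset.sum_map, Finset.mul_sum]
        rfl
    _ ≤ exp 1 * ∑' z : ℤ, exp (-|(z : ℝ)|) := by
        gcongr
        exact hsum.sum_le_tsum _ fun z _ => (exp_pos _).le

variable {A : Type*} [Fintype A]

lemma abs_mul_sub_convex_comb_le {x x₀ y s R : ℝ} (hs₀ : 0 ≤ s) (hs₁ : s ≤ 1) (hR : 0 ≤ R)
    (hclose : |R * x - R * x₀| ≤ 1) :
    |R * (x - ((1 - s) * y + s * x₀))| ≤ R * |x - y| + 1 := by
  have hs : 0 ≤ 1 - s := sub_nonneg.2 hs₁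
  calc |R * (x - ((1 - s) * y + s * x₀))|
      = |(1 - s) * (R * (x - y)) + s * (R * x - R * x₀)| := by ring_nf
    _ ≤ (1 - s) * (R * |x - y|) + s * |R * x - R * x₀| := by
        refine (abs_add_le _ _).trans_eq ?_
        rw [abs_mul, abs_mul, abs_mul s, abs_of_nonneg hs₀, abs_of_nonneg hR, abs_of_nonneg hs]
    _ ≤ 1 * (R * |x - y|) + 1 * 1 := by gcongr; linarith
    _ = R * |x - y| + 1 := by ring

lemma sq_mul_sum_mul_sub_div_le {ρ m m₀ θ : A → ℝ} (hρ : ∀ a, 0 < ρ a)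
    (hm : m ∈ stdSimplex ℝ A) (hm₀ : m₀ ∈ stdSimplex ℝ A) {s R : ℝ} (hs₀ : 0 ≤ s) (hs₁ : s < 1)
    (hθ : ∀ a, θ a = (1 - s) * ρ a + s * m₀ a) (hR : 0 ≤ R)
    (hclose : ∀ a, |R * m a - R * m₀ a| ≤ 1) :
    R ^ 2 * ∑ a, m a * (s * (m a - m₀ a) / θ a) ≤
      ∑ a, (R * |m a - ρ a| + 1) * (1 / ((1 - s) * ρ a)) := by
  have hρs : ∀ a, 0 < (1 - s) * ρ a := fun a => mul_pos (by linarith) (hρ a)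
  have hθρ : ∀ a, (1 - s) * ρ a ≤ θ a := fun a =>
    (le_add_of_nonneg_right (mul_nonneg hs₀ (hm₀.1 a))).trans_eq (hθ a).symm
  have hθpos : ∀ a, 0 < θ a := fun a => (hρs a).trans_le (hθρ a)
  have hmass : ∑ a, s * (m a - m₀ a) = 0 := by
    rw [← Finset.mul_sum, Finset.sum_sub_distrib, hm.2, hm₀.2, sub_self, mul_zero]
  calc _ = ∑ a, R * (m a - θ a) * (s * (R * m a - R * m₀ a)) / θ a +
        R ^ 2 * ∑ a, s * (m a - m₀ a) := by
        rw [Finset.mul_sum, Finset.mul_sum, ← Finset.sum_add_distrib]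
        refine Finset.sum_congr rfl fun a _ => ?_
        have := (hθpos a).ne'
        field_simp
        ring
    _ = ∑ a, R * (m a - θ a) * (s * (R * m a - R * m₀ a)) / θ a := by
        rw [hmass, mul_zero, add_zero]
    _ ≤ ∑ a, (R * |m a - ρ a| + 1) * (1 * 1) / ((1 - s) * ρ a) := by
        refine Finset.sum_le_sum fun a _ => (le_abs_self _).trans ?_
        rw [abs_div, abs_mul, abs_mul s, abs_of_nonneg hs₀, abs_of_pos (hθpos a)]
        gcongr
        exacts [hρs a, hθ a ▸ abs_mul_sub_convex_comb_le hs₀ hs₁.le hR (hclose a), hclose a, hθρ a]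
    _ = _ := by simp only [mul_one, mul_one_div]

lemma mul_sub_mul_sq_le {c η x : ℝ} (hη : 0 < η) :
    (x + 1) * c - η * x ^ 2 ≤ (c + 1) ^ 2 / (4 * η) + c - x := by
  have hsq : (c + 1) ^ 2 / (4 * η) - ((c + 1) * x - η * x ^ 2) =
      (c + 1 - 2 * η * x) ^ 2 / (4 * η) := by
    field_simp
    ring
  have : 0 ≤ (c + 1 - 2 * η * x) ^ 2 / (4 * η) := by positivity
  linarith

variable [DecidableEq A] {N : ℕ}

lemma prod_mul_exp_relEnt_le {ρ : A → ℝ} (hρ : ∀ a, 0 < ρ a) {s : ℝ} (hs₀ : 0 ≤ s) (hs₁ : s ≤ 1)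
    (σ : Fin N → A) :
    (∏ i, ρ (σ i)) * exp (s * (N * relEnt (empirical σ) ρ)) ≤
      ∏ i, ((1 - s) * ρ (σ i) + s * empirical σ (σ i)) := by
  have hexp : exp (s * (N * relEnt (empirical σ) ρ)) =
      ∏ i, exp (s * log (empirical σ (σ i) / ρ (σ i))) := by
    rw [prod_exp_comp σ fun a => s * log (empirical σ a / ρ a), mul_left_comm, relEnt,
      Finset.mul_sum]
    simp only [mul_left_comm]
  rw [hexp, ← Finset.prod_mul_distrib]
  refine Finset.prod_le_prod (fun i _ => mul_nonneg (hρ _).le (exp_pos _).le) fun i _ => ?_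
  have hm := empirical_apply_pos σ i
  calc ρ (σ i) * exp (s * log (empirical σ (σ i) / ρ (σ i)))
      = ρ (σ i) ^ (1 - s) * empirical σ (σ i) ^ s := by
        rw [rpow_sub (hρ _), rpow_one, mul_comm s, ← rpow_def_of_pos (div_pos hm (hρ _)),
          div_rpow hm.le (hρ _).le]
        ring
    _ ≤ _ := geom_mean_le_arith_mean2_weighted (by linarith) hs₀ (hρ _).le hm.le (by ring)

lemma prod_le_prod_mul_exp {θ θ' : A → ℝ} (hθ : ∀ a, 0 < θ a) (hθ' : ∀ a, 0 ≤ θ' a)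
    (σ : Fin N → A) :
    ∏ i, θ' (σ i) ≤
      (∏ i, θ (σ i)) * exp (N * ∑ a, empirical σ a * ((θ' a - θ a) / θ a)) := by
  rw [← prod_exp_comp σ fun a => (θ' a - θ a) / θ a, ← Finset.prod_mul_distrib]
  refine Finset.prod_le_prod (fun i _ => hθ' _) fun i _ => ?_
  have hθi := hθ (σ i)
  calc θ' (σ i) = θ (σ i) * ((θ' (σ i) - θ (σ i)) / θ (σ i) + 1) := by field_simp; ring
    _ ≤ _ := by gcongr; exact add_one_le_exp _

lemma prod_convex_comb_empirical_le_of_close {ρ : A → ℝ} (hρ : ∀ a, 0 < ρ a) {s : ℝ}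
    (hs₀ : 0 ≤ s) (hs₁ : s < 1) (hN : N ≠ 0) {σ σ₀ : Fin N → A}
    (hclose : ∀ a, |√N * empirical σ a - √N * empirical σ₀ a| ≤ 1) :
    ∏ i, ((1 - s) * ρ (σ i) + s * empirical σ (σ i)) ≤
      (∏ i, ((1 - s) * ρ (σ i) + s * empirical σ₀ (σ i))) *
        exp (∑ a, (√N * |empirical σ a - ρ a| + 1) * (1 / ((1 - s) * ρ a))) := by
  have hm := empirical_mem_stdSimplex hN σ
  have hm₀ := empirical_mem_stdSimplex hN σ₀
  have hmix : ∀ {m : A → ℝ}, m ∈ stdSimplex ℝ A → ∀ a, 0 < (1 - s) * ρ a + s * m a :=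
    fun hm a => add_pos_of_pos_of_nonneg (mul_pos (sub_pos.2 hs₁) (hρ a))
      (mul_nonneg hs₀ (hm.1 a))
  refine (prod_le_prod_mul_exp (hmix hm₀) (fun a => (hmix hm a).le) σ).trans ?_
  have hexponent := sq_mul_sum_mul_sub_div_le hρ hm hm₀ hs₀ hs₁ (fun _ => rfl) (sqrt_nonneg N)
    hclose
  simp only [add_sub_add_left_eq_sub, ← mul_sub]
  rw [sq_sqrt N.cast_nonneg] at hexponent
  gcongr
  exact Finset.prod_nonneg fun i _ => (hmix hm₀ _).le

lemma exists_prod_mul_exp_relEnt_le_of_close {ρ : A → ℝ} (hρ : ∀ a, 0 < ρ a)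
    (hρ₁ : ∑ a, ρ a = 1) {r s : ℝ} (hrs : r < s) (hs₀ : 0 ≤ s) (hs₁ : s < 1) :
    ∃ K : A → ℝ, ∀ {N : ℕ} (σ σ₀ : Fin N → A), N ≠ 0 →
      (∀ a, |√N * empirical σ a - √N * empirical σ₀ a| ≤ 1) →
      (∏ i, ρ (σ i)) * exp (r * (N * relEnt (empirical σ) ρ)) ≤
        (∏ i, ((1 - s) * ρ (σ i) + s * empirical σ₀ (σ i))) *
          ∏ a, exp (K a - √N * |empirical σ a - ρ a|) := by
  let c : A → ℝ := fun a => 1 / ((1 - s) * ρ a)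
  let η : ℝ := (s - r) / 4
  have hη : 0 < η := div_pos (sub_pos.2 hrs) four_pos
  refine ⟨fun a => (c a + 1) ^ 2 / (4 * η) + c a, fun {N} σ σ₀ hN hclose => ?_⟩
  set m := empirical σ
  have hm₀ := empirical_mem_stdSimplex hN σ₀
  have hmix : ∀ i, 0 ≤ (1 - s) * ρ (σ i) + s * empirical σ₀ (σ i) := fun i =>
    add_nonneg (mul_nonneg (sub_pos.2 hs₁).le (hρ _).le) (mul_nonneg hs₀ (hm₀.1 _))
  have hgap : (r - s) * (N * relEnt m ρ) ≤ -∑ a, η * (√N * |m a - ρ a|) ^ 2 := by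
    have hpinsker := sum_sq_sub_le_relEnt (empirical_mem_stdSimplex hN σ) hρ hρ₁
    simp only [mul_pow, sq_abs, sq_sqrt N.cast_nonneg, ← Finset.mul_sum]
    calc (r - s) * (N * relEnt m ρ) = -(η * (N * (4 * relEnt m ρ))) := by simp only [η]; ring
      _ ≤ _ := by gcongr
  have hsquare : ∑ a, (√N * |m a - ρ a| + 1) * c a + -∑ a, η * (√N * |m a - ρ a|) ^ 2 ≤
      ∑ a, ((c a + 1) ^ 2 / (4 * η) + c a - √N * |m a - ρ a|) := by
    rw [← sub_eq_add_neg, ← Finset.sum_sub_distrib]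
    exact Finset.sum_le_sum fun a _ => mul_sub_mul_sq_le hη
  calc (∏ i, ρ (σ i)) * exp (r * (N * relEnt m ρ))
      = (∏ i, ρ (σ i)) * exp (s * (N * relEnt m ρ)) * exp ((r - s) * (N * relEnt m ρ)) := by
        rw [mul_assoc, ← exp_add]; ring_nf
    _ ≤ (∏ i, ((1 - s) * ρ (σ i) + s * empirical σ₀ (σ i))) *
          exp (∑ a, (√N * |m a - ρ a| + 1) * c a) * exp (-∑ a, η * (√N * |m a - ρ a|) ^ 2) := by
        refine mul_le_mul ?_ (exp_le_exp.2 hgap) (exp_pos _).le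
          (mul_nonneg (Finset.prod_nonneg fun i _ => hmix i) (exp_pos _).le)
        exact (prod_mul_exp_relEnt_le hρ hs₀ hs₁.le σ).trans
          (prod_convex_comb_empirical_le_of_close hρ hs₀ hs₁ hN hclose)
    _ ≤ _ := by
        rw [mul_assoc, ← exp_add, ← exp_sum]
        gcongr
        exact Finset.prod_nonneg fun i _ => hmix i

lemma exists_sum_cell_prod_mul_exp_relEnt_le {ρ : A → ℝ} (hρ : ∀ a, 0 < ρ a)
    (hρ₁ : ∑ a, ρ a = 1) {r : ℝ} (hr : r < 1) :
    ∃ K : A → ℝ, ∀ {N : ℕ}, N ≠ 0 → ∀ z : A → ℤ,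
      ∑ σ : Fin N → A with (fun a => ⌊√N * empirical σ a⌋) = z,
          (∏ i, ρ (σ i)) * exp (r * (N * relEnt (empirical σ) ρ)) ≤
        ∏ a, exp (K a) * exp (-|z a - √N * ρ a|) := by
  obtain ⟨s, hs, hs₁⟩ := exists_between (max_lt hr one_pos)
  obtain ⟨hrs, hs₀⟩ := max_lt_iff.1 hs
  obtain ⟨K, hK⟩ := exists_prod_mul_exp_relEnt_le_of_close hρ hρ₁ hrs hs₀.le hs₁
  refine ⟨fun a => K a + 1, fun {N} hN z => ?_⟩
  by_cases hcell : ∃ σ₀ : Fin N → A, (fun a => ⌊√N * empirical σ₀ a⌋) = z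
  swap
  · rw [Finset.filter_false_of_mem fun σ _ hσ => hcell ⟨σ, hσ⟩, Finset.sum_empty]
    positivity
  obtain ⟨σ₀, hσ₀⟩ := hcell
  -- Freezing the mixture at one configuration `σ₀` of the cell makes it a single probability
  -- measure, whose product has total mass one.
  let θ : A → ℝ := fun a => (1 - s) * ρ a + s * empirical σ₀ a
  have hm₀ := empirical_mem_stdSimplex hN σ₀
  have hθ : θ ∈ stdSimplex ℝ A := convex_stdSimplex ℝ A ⟨fun a => (hρ a).le, hρ₁⟩ hm₀
    (sub_pos.2 hs₁).le hs₀.le (sub_add_cancel 1 s)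
  have hdist : ∀ σ : Fin N → A, (fun a => ⌊√N * empirical σ a⌋) = z → ∀ a,
      |z a - √N * ρ a| ≤ √N * |empirical σ a - ρ a| + 1 := fun σ hσ a => by
    have hscale : √N * |empirical σ a - ρ a| = |√N * empirical σ a - √N * ρ a| := by
      rw [← mul_sub, abs_mul, abs_of_nonneg (sqrt_nonneg _)]
    rw [hscale, ← hσ]
    exact abs_floor_sub_le _ _
  calc _ ≤ ∑ σ : Fin N → A with (fun a => ⌊√N * empirical σ a⌋) = z,
          (∏ i, θ (σ i)) * ∏ a, exp (K a + 1) * exp (-|z a - √N * ρ a|) := by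
        refine Finset.sum_le_sum fun σ hσ => ?_
        rw [Finset.mem_filter_univ] at hσ
        refine (hK σ σ₀ hN fun a => (Int.abs_sub_lt_one_of_floor_eq_floor
          ((congrFun hσ a).trans (congrFun hσ₀ a).symm)).le).trans ?_
        simp only [← exp_add]
        gcongr with a
        · exact Finset.prod_nonneg fun i _ => hθ.1 _
        · linarith [hdist σ hσ a]
    _ ≤ ∑ σ : Fin N → A, (∏ i, θ (σ i)) * ∏ a, exp (K a + 1) * exp (-|z a - √N * ρ a|) :=
        Finset.sum_le_univ_sum_of_nonneg fun σ =>
          mul_nonneg (Finset.prod_nonneg fun i _ => hθ.1 _) (by positivity)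
    _ = ∏ a, exp (K a + 1) * exp (-|z a - √N * ρ a|) := by
        rw [← Finset.sum_mul, (prod_mem_stdSimplex hθ).2, one_mul]

lemma exists_sum_prod_mul_exp_relEnt_le {ρ : A → ℝ} (hρ : ∀ a, 0 < ρ a)
    (hρ₁ : ∑ a, ρ a = 1) {r : ℝ} (hr : r < 1) :
    ∃ K : ℝ, ∀ {N : ℕ}, N ≠ 0 →
      ∑ σ : Fin N → A, (∏ i, ρ (σ i)) * exp (r * (N * relEnt (empirical σ) ρ)) ≤ K := by
  obtain ⟨K, hK⟩ := exists_sum_cell_prod_mul_exp_relEnt_le hρ hρ₁ hr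
  obtain ⟨S, hS⟩ := exists_sum_exp_neg_abs_sub_le
  refine ⟨∏ a, exp (K a) * S, fun {N} hN => ?_⟩
  let cell : (Fin N → A) → A → ℤ := fun σ a => ⌊√N * empirical σ a⌋
  let t : A → Finset ℤ := fun a => Finset.univ.image fun σ => cell σ a
  have ht : ∀ σ ∈ Finset.univ, cell σ ∈ Fintype.piFinset t := fun σ _ =>
    Fintype.mem_piFinset.2 fun a => Finset.mem_image_of_mem _ (Finset.mem_univ σ)
  calc _ = ∑ z ∈ Fintype.piFinset t, ∑ σ with cell σ = z,
          (∏ i, ρ (σ i)) * exp (r * (N * relEnt (empirical σ) ρ)) :=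
        (Finset.sum_fiberwise_of_maps_to ht _).symm
    _ ≤ ∑ z ∈ Fintype.piFinset t, ∏ a, exp (K a) * exp (-|z a - √N * ρ a|) :=
        Finset.sum_le_sum fun z _ => hK hN z
    _ = ∏ a, ∑ z ∈ t a, exp (K a) * exp (-|z - √N * ρ a|) :=
        (Finset.prod_univ_sum t fun a z => exp (K a) * exp (-|z - √N * ρ a|)).symm
    _ ≤ ∏ a, exp (K a) * S := by
        refine Finset.prod_le_prod (fun a _ => by positivity) fun a _ => ?_
        rw [← Finset.mul_sum]
        gcongr
        exact hS _ _

end ExponentialMoment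

section Gibbs

variable {A : Type*} [Fintype A] {N : ℕ}

lemma sum_prod_mul_apply {ρ : A → ℝ} (hρ₁ : ∑ a, ρ a = 1) (i : Fin N) (g : A → ℝ) :
    ∑ σ : Fin N → A, (∏ j, ρ (σ j)) * g (σ i) = ∑ a, ρ a * g a := by
  have h := sum_prod_mul_comp hρ₁ (Function.injective_of_subsingleton fun _ : Unit => i)
    fun τ => g (τ ())
  rw [← (Equiv.funUnique Unit A).symm.sum_comp] at h
  simpa using h

variable [DecidableEq A]

lemma sum_prod_mul_sum_empirical {ρ : A → ℝ} (hρ₁ : ∑ a, ρ a = 1) (hN : N ≠ 0) (g : A → ℝ) :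
    ∑ σ : Fin N → A, (∏ i, ρ (σ i)) * ∑ a, empirical σ a * g a = ∑ a, ρ a * g a := by
  have hN' : (N : ℝ) ≠ 0 := Nat.cast_ne_zero.2 hN
  refine mul_left_cancel₀ hN' ?_
  calc (N : ℝ) * ∑ σ : Fin N → A, (∏ i, ρ (σ i)) * ∑ a, empirical σ a * g a
      = ∑ σ : Fin N → A, ∑ i, (∏ j, ρ (σ j)) * g (σ i) := by
        simp only [← Finset.mul_sum, sum_comp_eq_mul_sum_empirical]
        simp only [Finset.mul_sum, mul_left_comm]
    _ = N * ∑ a, ρ a * g a := by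
        rw [Finset.sum_comm, Finset.sum_congr rfl fun i _ => sum_prod_mul_apply hρ₁ i g]
        simp

/-- The Gibbs measure on configurations of `N` spins with energy density `F`. -/
noncomputable def gibbsMeasure (F : (A → ℝ) → ℝ) (N : ℕ) : (Fin N → A) → ℝ :=
  fun σ => exp (N * F (empirical σ)) / ∑ τ : Fin N → A, exp (N * F (empirical τ))

lemma gibbsMeasure_mem_stdSimplex [Nonempty A] (F : (A → ℝ) → ℝ) (N : ℕ) :
    gibbsMeasure F N ∈ stdSimplex ℝ (Fin N → A) := by
  have hZ : 0 < ∑ τ : Fin N → A, exp (N * F (empirical τ)) :=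
    Finset.sum_pos (fun τ _ => exp_pos _) Finset.univ_nonempty
  exact ⟨fun σ => div_nonneg (exp_pos _).le hZ.le, by
    simp only [gibbsMeasure, ← Finset.sum_div, div_self hZ.ne']⟩

lemma gibbsMeasure_comp_perm (F : (A → ℝ) → ℝ) (g : Equiv.Perm (Fin N)) (σ : Fin N → A) :
    gibbsMeasure F N (σ ∘ g) = gibbsMeasure F N σ := by
  simp only [gibbsMeasure, empirical_comp_perm]

/-- The energy density, up to an additive constant, of the Gibbs measure with respect to the
product measure `ρ^{⊗N}` instead of the counting measure; the constant makes it vanish at `ρ`. -/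
noncomputable def relEnergy (F : (A → ℝ) → ℝ) (ρ m : A → ℝ) : ℝ :=
  F m - F ρ - ∑ a, (m a - ρ a) * log (ρ a)

lemma gibbsMeasure_eq_tilt (F : (A → ℝ) → ℝ) {ρ : A → ℝ} (hρ : ∀ a, 0 < ρ a) (σ : Fin N → A) :
    gibbsMeasure F N σ = (∏ i, ρ (σ i)) * exp (N * relEnergy F ρ (empirical σ)) /
      ∑ τ : Fin N → A, (∏ i, ρ (τ i)) * exp (N * relEnergy F ρ (empirical τ)) := by
  set c := exp (N * (∑ a, ρ a * log (ρ a) - F ρ))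
  have hweight : ∀ τ : Fin N → A, (∏ i, ρ (τ i)) * exp (N * relEnergy F ρ (empirical τ)) =
      c * exp (N * F (empirical τ)) := fun τ => by
    have hprod : ∏ i, ρ (τ i) = exp (N * ∑ a, empirical τ a * log (ρ a)) := by
      rw [← prod_exp_comp]
      exact Finset.prod_congr rfl fun i _ => (exp_log (hρ _)).symm
    rw [hprod, ← exp_add, ← exp_add]
    congr 1
    simp only [relEnergy, sub_mul, Finset.sum_sub_distrib]
    ring
  simp only [hweight, ← Finset.mul_sum]
  exact (mul_div_mul_left _ _ (exp_pos _).ne').symm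

lemma exists_le_sum_prod_mul_of_le {φ : (A → ℝ) → ℝ} {ρ : A → ℝ} (hρ : ∀ a, 0 < ρ a)
    (hρ₁ : ∑ a, ρ a = 1) {b : ℝ} (hb : 0 ≤ b) (g : A → ℝ)
    (hlow : ∀ m ∈ stdSimplex ℝ A,
      ∑ a, (m a - ρ a) * g a - b * ∑ a, (m a - ρ a) ^ 2 ≤ φ m) :
    ∃ C, ∀ {N : ℕ}, N ≠ 0 →
      C ≤ ∑ σ : Fin N → A, (∏ i, ρ (σ i)) * (N * φ (empirical σ)) := by
  obtain ⟨K, hK⟩ := exists_sum_prod_mul_exp_relEnt_le hρ hρ₁ one_half_lt_one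
  refine ⟨-(8 * b * K), fun {N} hN => ?_⟩
  have hprod := prod_mem_stdSimplex (ι := Fin N) ⟨fun a => (hρ a).le, hρ₁⟩
  have hmean : ∑ σ : Fin N → A, (∏ i, ρ (σ i)) * ∑ a, (empirical σ a - ρ a) * g a = 0 := by
    simp only [sub_mul, Finset.sum_sub_distrib, mul_sub, sum_prod_mul_sum_empirical hρ₁ hN,
      ← Finset.sum_mul, hprod.2, one_mul, sub_self]
  have hsq : ∀ σ : Fin N → A, N * ∑ a, (empirical σ a - ρ a) ^ 2 ≤
      8 * exp (1 / 2 * (N * relEnt (empirical σ) ρ)) := fun σ => by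
    have hpinsker := sum_sq_sub_le_relEnt (empirical_mem_stdSimplex hN σ) hρ hρ₁
    calc N * ∑ a, (empirical σ a - ρ a) ^ 2 ≤ N * (4 * relEnt (empirical σ) ρ) := by gcongr
      _ = 8 * (1 / 2 * (N * relEnt (empirical σ) ρ)) := by ring
      _ ≤ _ := by gcongr; linarith [add_one_le_exp (1 / 2 * (N * relEnt (empirical σ) ρ))]
  calc -(8 * b * K) ≤ -(8 * b * ∑ σ : Fin N → A, (∏ i, ρ (σ i)) *
        exp (1 / 2 * (N * relEnt (empirical σ) ρ))) := by gcongr; exact hK hN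
    _ = N * ∑ σ : Fin N → A, (∏ i, ρ (σ i)) * ∑ a, (empirical σ a - ρ a) * g a -
          b * ∑ σ : Fin N → A, (∏ i, ρ (σ i)) *
            (8 * exp (1 / 2 * (N * relEnt (empirical σ) ρ))) := by
        simp only [hmean, mul_left_comm _ (8 : ℝ), ← Finset.mul_sum]
        ring
    _ = ∑ σ : Fin N → A, (∏ i, ρ (σ i)) * (N * ∑ a, (empirical σ a - ρ a) * g a -
          b * (8 * exp (1 / 2 * (N * relEnt (empirical σ) ρ)))) := by
        rw [Finset.mul_sum, Finset.mul_sum, ← Finset.sum_sub_distrib]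
        exact Finset.sum_congr rfl fun σ _ => by ring
    _ ≤ ∑ σ : Fin N → A, (∏ i, ρ (σ i)) * (N * φ (empirical σ)) := by
        gcongr with σ
        · exact hprod.1 σ
        calc _ ≤ N * ∑ a, (empirical σ a - ρ a) * g a -
              b * (N * ∑ a, (empirical σ a - ρ a) ^ 2) :=
            sub_le_sub_left (mul_le_mul_of_nonneg_left (hsq σ) hb) _
          _ = N * (∑ a, (empirical σ a - ρ a) * g a - b * ∑ a, (empirical σ a - ρ a) ^ 2) := by
              ring
          _ ≤ _ := by gcongr; exact hlow _ (empirical_mem_stdSimplex hN σ)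

theorem exists_relEnt_gibbsMeasure_le {F : (A → ℝ) → ℝ} {ρ : A → ℝ} (hρ : ∀ a, 0 < ρ a)
    (hρ₁ : ∑ a, ρ a = 1) {c : ℝ} (hc : 0 < c)
    (hup : ∀ m ∈ stdSimplex ℝ A, relEnergy F ρ m ≤ (1 - c) * relEnt m ρ)
    {b : ℝ} (hb : 0 ≤ b) (g : A → ℝ)
    (hlow : ∀ m ∈ stdSimplex ℝ A,
      ∑ a, (m a - ρ a) * g a - b * ∑ a, (m a - ρ a) ^ 2 ≤ relEnergy F ρ m) :
    ∃ C, ∀ {N : ℕ}, N ≠ 0 →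
      relEnt (gibbsMeasure F N) (fun σ => ∏ i, ρ (σ i)) ≤ C := by
  have hρmem : ρ ∈ stdSimplex ℝ A := ⟨fun a => (hρ a).le, hρ₁⟩
  obtain ⟨K, hK⟩ := exists_sum_prod_mul_exp_relEnt_le hρ hρ₁ (by linarith : 1 - c / 2 < 1)
  obtain ⟨D, hD⟩ := exists_le_sum_prod_mul_of_le hρ hρ₁ hb g hlow
  refine ⟨1 / (c / 2) * log K - (1 + 1 / (c / 2)) * D, fun {N} hN => ?_⟩
  have hprod := prod_mem_stdSimplex (ι := Fin N) hρmem
  have hexponent : ∀ σ : Fin N → A, (1 + c / 2) * (N * relEnergy F ρ (empirical σ)) ≤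
      (1 - c / 2) * (N * relEnt (empirical σ) ρ) := fun σ => by
    have hm := empirical_mem_stdSimplex hN σ
    have hnonneg : 0 ≤ N * relEnt (empirical σ) ρ :=
      mul_nonneg N.cast_nonneg (relEnt_nonneg_of_pos hm hρ hρ₁)
    calc (1 + c / 2) * (N * relEnergy F ρ (empirical σ))
        ≤ (1 + c / 2) * (N * ((1 - c) * relEnt (empirical σ) ρ)) := by gcongr; exact hup _ hm
      _ = (1 - c / 2) * (N * relEnt (empirical σ) ρ) -
            c ^ 2 / 2 * (N * relEnt (empirical σ) ρ) := by ring
      _ ≤ _ := sub_le_self _ (by positivity)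
  refine (relEnt_tilt_le hprod (half_pos hc) (gibbsMeasure_eq_tilt F hρ)).trans ?_
  gcongr
  · exact sum_mul_exp_pos hprod _
  · refine le_trans (Finset.sum_le_sum fun σ _ => ?_) (hK hN)
    exact mul_le_mul_of_nonneg_left (exp_le_exp.2 (hexponent σ)) (hprod.1 σ)
  · exact hD hN

end Gibbs

section SecondOrder

open Asymptotics
open scoped Topology

lemma isBigO_principal_of_isBigO_nhdsWithin {X : Type*} [TopologicalSpace X] {K : Set X} {a : X}
    {f g : X → ℝ} (hK : IsCompact K) (hf : ContinuousOn f K) (hg : ContinuousOn g K)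
    (hg₀ : ∀ x ∈ K, x ≠ a → g x ≠ 0) (hfg : f =O[𝓝[K] a] g) : f =O[𝓟 K] g := by
  obtain ⟨C, hC⟩ := hfg.bound
  obtain ⟨U, hU, haU, hbound⟩ := mem_nhdsWithin.1 hC
  have hnear : f =O[𝓟 (K ∩ U)] g :=
    isBigO_principal.2 ⟨C, fun x hx => hbound ⟨hx.2, hx.1⟩⟩
  have hcompact : IsCompact (K \ U) := hK.diff hU
  have hfar : f =O[𝓟 (K \ U)] g := by
    have hone : f =O[𝓟 (K \ U)] fun _ => (1 : ℝ) :=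
      (hf.mono Set.sdiff_subset).isBigO_principal hcompact (by simp)
    refine hone.trans ((hg.mono Set.sdiff_subset).isBigO_rev_principal hcompact ?_ 1)
    exact fun x hx => hg₀ x hx.1 fun h => hx.2 (h ▸ haU)
  have := hnear.sup hfar
  rwa [sup_principal, Set.inter_union_sdiff] at this

variable {E F : Type*} [NormedAddCommGroup E] [NormedSpace ℝ E] [NormedAddCommGroup F]
  [NormedSpace ℝ F]

lemma differentiableAt_fderiv_of_contDiffAt {f : E → F} {a : E} (hf : ContDiffAt ℝ 2 f a) :
    DifferentiableAt ℝ (fderiv ℝ f) a :=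
  (hf.fderiv_right (m := 1) (by norm_num)).differentiableAt (by norm_num)

lemma taylor_two_isLittleO {f : E → F} {a : E} (hf : ContDiffAt ℝ 2 f a) :
    (fun x => f x - f a - fderiv ℝ f a (x - a) -
      (1 / 2 : ℝ) • fderiv ℝ (fderiv ℝ f) a (x - a) (x - a)) =o[𝓝 a] fun x => ‖x - a‖ ^ 2 := by
  set T := fderiv ℝ (fderiv ℝ f) a
  have hsymm : ∀ v w, T v w = T w v :=
    hf.isSymmSndFDerivAt (by simp [minSmoothness_of_isRCLikeNormedField])
  have hT : (fun x => fderiv ℝ f x - fderiv ℝ f a - T (x - a)) =o[𝓝 a] fun x => ‖x - a‖ ^ 1 := by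
    simpa using (differentiableAt_fderiv_of_contDiffAt hf).hasFDerivAt.isLittleO.norm_right
  have hdiff : ∀ᶠ x in 𝓝 a, DifferentiableAt ℝ f x :=
    (hf.eventually (by simp)).mono fun x hx => hx.differentiableAt (by norm_num)
  obtain ⟨δ, hδ, hball⟩ := Metric.eventually_nhds_iff_ball.1 hdiff
  have hderiv : ∀ x ∈ Metric.ball a δ, HasFDerivWithinAt
      (fun x => f x - fderiv ℝ f a (x - a) - (1 / 2 : ℝ) • T (x - a) (x - a))
      (fderiv ℝ f x - fderiv ℝ f a - T (x - a)) (Metric.ball a δ) x := fun x hx => by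
    have hsub : HasFDerivAt (fun x => x - a) (.id ℝ E) x := (hasFDerivAt_id x).sub_const a
    have hquad := ((T.hasFDerivAt.comp x hsub).clm_apply hsub).const_smul (1 / 2 : ℝ)
    refine (((hball x hx).hasFDerivAt.sub ((fderiv ℝ f a).hasFDerivAt.comp x hsub)).sub
      hquad).hasFDerivWithinAt.congr_fderiv ?_
    ext v
    have hhalves : (2⁻¹ : ℝ) • T (x - a) v + (2⁻¹ : ℝ) • T (x - a) v = T (x - a) v := by
      rw [← add_smul]
      norm_num
    simp [-map_sub, hsymm v (x - a), hhalves]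
  have := (convex_ball a δ).isLittleO_pow_succ (Metric.mem_ball_self hδ) hderiv
    (hT.mono nhdsWithin_le_nhds)
  rw [nhdsWithin_eq_nhds.2 (Metric.ball_mem_nhds a hδ)] at this
  refine this.congr_left fun x => ?_
  simp
  abel

lemma sub_sub_fderiv_isBigO_sq {f : E → F} {a : E} (hf : ContDiffAt ℝ 2 f a) :
    (fun x => f x - f a - fderiv ℝ f a (x - a)) =O[𝓝 a] fun x => ‖x - a‖ ^ 2 := by
  set T := fderiv ℝ (fderiv ℝ f) a
  have hquad : (fun x => (1 / 2 : ℝ) • T (x - a) (x - a)) =O[𝓝 a] fun x => ‖x - a‖ ^ 2 :=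
    .const_smul_left (.of_bound ‖T‖ (.of_forall fun x => by
      simpa [sq, mul_assoc] using T.le_opNorm₂ (x - a) (x - a))) _
  exact ((taylor_two_isLittleO hf).isBigO.add hquad).congr_left fun x => sub_add_cancel _ _

lemma sq_norm_isBigO_of_apply_self_ne_zero [FiniteDimensional ℝ E] {T : E →L[ℝ] E →L[ℝ] ℝ}
    (hT : ∀ v, v ≠ 0 → T v v ≠ 0) : (fun v => ‖v‖ ^ 2) =O[⊤] fun v => T v v := by
  have hsphere : (fun _ => (1 : ℝ)) =O[𝓟 (Metric.sphere (0 : E) 1)] fun v => T v v :=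
    ContinuousOn.isBigO_rev_principal (by fun_prop) (isCompact_sphere 0 1)
      (fun v hv => hT v (ne_zero_of_mem_unit_sphere ⟨v, hv⟩)) 1
  obtain ⟨C, hC⟩ := isBigO_principal.1 hsphere
  refine isBigO_top.2 ⟨C, fun v => ?_⟩
  rcases eq_or_ne v 0 with rfl | hv
  · simp
  have hnorm : ‖v‖ ≠ 0 := norm_ne_zero_iff.2 hv
  have hunit := hC (‖v‖⁻¹ • v) (by simp [norm_smul, hnorm])
  simp only [map_smul, smul_apply, smul_eq_mul, norm_mul, norm_inv, norm_norm, norm_one] at hunit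
  calc ‖‖v‖ ^ 2‖ = ‖v‖ ^ 2 * 1 := by simp
    _ ≤ ‖v‖ ^ 2 * (C * (‖v‖⁻¹ * (‖v‖⁻¹ * ‖T v v‖))) := by gcongr
    _ = C * ‖T v v‖ := by field_simp

lemma sq_norm_isBigO_of_isLocalMax [FiniteDimensional ℝ E] {f : E → ℝ} {a : E}
    (hf : ContDiffAt ℝ 2 f a) (ha : IsLocalMax f a)
    (hT : ∀ v, v ≠ 0 → fderiv ℝ (fderiv ℝ f) a v v ≠ 0) :
    (fun x => ‖x - a‖ ^ 2) =O[𝓝 a] fun x => f a - f x := by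
  set T := fderiv ℝ (fderiv ℝ f) a
  have hsq : (fun x => ‖x - a‖ ^ 2) =O[𝓝 a] fun x => (1 / 2 : ℝ) * T (x - a) (x - a) := by
    refine .const_mul_right (by norm_num) ?_
    exact (sq_norm_isBigO_of_apply_self_ne_zero hT).comp_tendsto (k := fun x => x - a) tendsto_top
  have htaylor := (taylor_two_isLittleO hf).trans_isBigO hsq
  refine hsq.trans (htaylor.right_isBigO_add.trans (.of_bound 1 (.of_forall fun x => ?_)))
  simp [ha.fderiv_eq_zero, T, abs_sub_comm]

lemma fderiv_fderiv_apply_eq_dotProduct {ι : Type*} [Fintype ι] [DecidableEq ι]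
    {f : (ι → ℝ) → ℝ} {a : ι → ℝ} (hf : DifferentiableAt ℝ (fderiv ℝ f) a) (v w : ι → ℝ) :
    fderiv ℝ (fderiv ℝ f) a v w = dotProduct v (Matrix.mulVec (.of fun k l =>
      fderiv ℝ (fun x => fderiv ℝ f x (Pi.single l 1)) a (Pi.single k 1)) w) := by
  have hentry : ∀ k l, fderiv ℝ (fun x => fderiv ℝ f x (Pi.single l 1)) a (Pi.single k 1) =
      fderiv ℝ (fderiv ℝ f) a (Pi.single k 1) (Pi.single l 1) := fun k l => by
    rw [fderiv_clm_apply hf (differentiableAt_const _)]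
    simp
  conv_lhs => rw [pi_eq_sum_univ' v, pi_eq_sum_univ' w]
  simp only [map_sum, map_smul, sum_apply, smul_apply, smul_eq_mul, dotProduct, Matrix.mulVec,
    Matrix.of_apply, hentry, Finset.mul_sum]
  rw [Finset.sum_comm]
  exact Finset.sum_congr rfl fun k _ => Finset.sum_congr rfl fun l _ => by ring

lemma fderiv_fderiv_apply_self_neg_of_posDef {ι : Type*} [Finite ι] [DecidableEq ι]
    {f : (ι → ℝ) → ℝ} {a : ι → ℝ} (hf : DifferentiableAt ℝ (fderiv ℝ f) a) {H : Matrix ι ι ℝ}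
    (hH : ∀ k l, H k l = -fderiv ℝ (fun x => fderiv ℝ f x (Pi.single l 1)) a (Pi.single k 1))
    (hpos : H.PosDef) {v : ι → ℝ} (hv : v ≠ 0) :
    fderiv ℝ (fderiv ℝ f) a v v < 0 := by
  cases nonempty_fintype ι
  have hneg : H = -.of fun k l =>
      fderiv ℝ (fun x => fderiv ℝ f x (Pi.single l 1)) a (Pi.single k 1) := Matrix.ext hH
  have hquad := hpos.dotProduct_mulVec_pos hv
  rw [hneg, star_trivial, Matrix.neg_mulVec, dotProduct_neg,
    ← fderiv_fderiv_apply_eq_dotProduct hf] at hquad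
  linarith

end SecondOrder

section FreeEntropy

variable {A : Type*} [Fintype A]

/-- The free entropy `F(m) + ent(m)` of a distribution `m`, whose maximizers describe the limiting
magnetization under `gibbsMeasure F N`. In the reduced coordinates `toSimplex` of the simplex it is
the function `G`. -/
noncomputable def freeEntropy (F : (A → ℝ) → ℝ) (m : A → ℝ) : ℝ :=
  F m + ∑ a, negMulLog (m a)

lemma relEnt_eq_sum_sub {ρ : A → ℝ} (hρ : ∀ a, 0 < ρ a) (m : A → ℝ) :
    relEnt m ρ = ∑ a, (-negMulLog (m a) - m a * log (ρ a)) :=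
  Finset.sum_congr rfl fun a _ => by
    rcases eq_or_ne (m a) 0 with hm | hm
    · simp [hm]
    · rw [log_div hm (hρ a).ne', negMulLog]
      ring

lemma continuous_relEnt_left {ρ : A → ℝ} (hρ : ∀ a, 0 < ρ a) :
    Continuous fun m => relEnt m ρ := by
  simp only [relEnt_eq_sum_sub hρ]
  fun_prop

lemma relEnergy_eq_freeEntropy_sub_add_relEnt (F : (A → ℝ) → ℝ) (m : A → ℝ) {ρ : A → ℝ}
    (hρ : ∀ a, 0 < ρ a) :
    relEnergy F ρ m = freeEntropy F m - freeEntropy F ρ + relEnt m ρ := by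
  simp only [relEnergy, freeEntropy, relEnt_eq_sum_sub hρ, sub_mul, Finset.sum_sub_distrib,
    Finset.sum_neg_distrib, negMulLog, neg_mul]
  ring

lemma continuousOn_freeEntropy {F : (A → ℝ) → ℝ} {S : Set (A → ℝ)} (hF : ContinuousOn F S) :
    ContinuousOn (freeEntropy F) S :=
  hF.add (by fun_prop)

end FreeEntropy

section ReducedCoordinates

open Asymptotics
open scoped Topology

variable {d : ℕ}

/-- The set `Δ̂` of the first `d` coordinates of the points of the standard simplex on `d + 1`
vertices. -/
def solidSimplex (d : ℕ) : Set (Fin d → ℝ) :=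
  {x | (∀ k, 0 ≤ x k) ∧ ∑ k, x k ≤ 1}

/-- The identification of `Δ̂` with the standard simplex, the last coordinate being the one that is
left out of `Δ̂`. -/
def toSimplex (x : Fin d → ℝ) : Fin (d + 1) → ℝ :=
  Fin.snoc x (1 - ∑ k, x k)

@[simp] lemma toSimplex_castSucc (x : Fin d → ℝ) (k : Fin d) : toSimplex x k.castSucc = x k :=
  Fin.snoc_castSucc ..

@[simp] lemma toSimplex_last (x : Fin d → ℝ) : toSimplex x (Fin.last d) = 1 - ∑ k, x k :=
  Fin.snoc_last ..

lemma mapsTo_toSimplex :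
    Set.MapsTo toSimplex (solidSimplex d) (stdSimplex ℝ (Fin (d + 1))) := fun x hx =>
  ⟨Fin.lastCases (by simpa using hx.2) (by simpa using hx.1), by simp [Fin.sum_univ_castSucc]⟩

lemma comp_castSucc_mem_solidSimplex {m : Fin (d + 1) → ℝ} (hm : m ∈ stdSimplex ℝ (Fin (d + 1))) :
    m ∘ Fin.castSucc ∈ solidSimplex d := by
  refine ⟨fun k => hm.1 _, ?_⟩
  have hsum := hm.2
  rw [Fin.sum_univ_castSucc] at hsum
  have hlast := hm.1 (Fin.last d)
  simp only [Function.comp_apply]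
  linarith

lemma surjOn_toSimplex :
    Set.SurjOn toSimplex (solidSimplex d) (stdSimplex ℝ (Fin (d + 1))) := fun m hm => by
  refine ⟨m ∘ Fin.castSucc, comp_castSucc_mem_solidSimplex hm, funext <| Fin.lastCases ?_ ?_⟩
  · have hsum := hm.2
    rw [Fin.sum_univ_castSucc] at hsum
    simp only [toSimplex_last, Function.comp_apply]
    linarith
  · simp

lemma contDiff_toSimplex {n : WithTop ℕ∞} : ContDiff ℝ n (toSimplex (d := d)) :=
  contDiff_pi.2 <| Fin.lastCases
    (by simp only [toSimplex_last]; fun_prop) (by simp only [toSimplex_castSucc]; fun_prop)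

lemma isCompact_solidSimplex : IsCompact (solidSimplex d) := by
  have himage : (· ∘ Fin.castSucc) '' stdSimplex ℝ (Fin (d + 1)) = solidSimplex d :=
    Set.Subset.antisymm (Set.image_subset_iff.2 fun m hm => comp_castSucc_mem_solidSimplex hm)
      fun x hx => ⟨toSimplex x, mapsTo_toSimplex hx, by ext k; simp⟩
  rw [← himage]
  exact (isCompact_stdSimplex (𝕜 := ℝ) _).image (by fun_prop)

lemma toSimplex_pos_of_mem_interior {a : Fin d → ℝ} (ha : a ∈ interior (solidSimplex d))
    (k : Fin (d + 1)) : 0 < toSimplex a k := by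
  set b : Fin d → ℝ := fun _ => 1 / (d + 1)
  have hnear : ∀ᶠ t : ℝ in 𝓝[>] 0, a + t • (a - b) ∈ solidSimplex d :=
    ((Continuous.tendsto' (by fun_prop) 0 a (by simp)).eventually
      (mem_interior_iff_mem_nhds.1 ha)).filter_mono nhdsWithin_le_nhds
  obtain ⟨t, hmem, ht : 0 < t⟩ := (hnear.and self_mem_nhdsWithin).exists
  have hcoord : toSimplex (a + t • (a - b)) k = (1 + t) * toSimplex a k - t / (d + 1) := by
    cases k using Fin.lastCases with
    | last =>
      simp only [toSimplex_last, Pi.add_apply, Pi.smul_apply, Pi.sub_apply, smul_eq_mul,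
        Finset.sum_add_distrib, ← Finset.mul_sum, Finset.sum_sub_distrib, b, Finset.sum_const,
        Finset.card_univ, Fintype.card_fin, nsmul_eq_mul]
      field_simp
      ring
    | cast k =>
      simp only [toSimplex_castSucc, Pi.add_apply, Pi.smul_apply, Pi.sub_apply, smul_eq_mul, b]
      ring
  have hnonneg := (mapsTo_toSimplex hmem).1 k
  have hpos : 0 < t / (d + 1) := by positivity
  rw [hcoord] at hnonneg
  exact pos_of_mul_pos_right (by linarith) (by linarith : 0 ≤ 1 + t)

lemma sq_norm_sub_le_sum_sq_toSimplex_sub (x a : Fin d → ℝ) :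
    ‖x - a‖ ^ 2 ≤ ∑ k, (toSimplex x k - toSimplex a k) ^ 2 := by
  have hnonneg : ∀ k ∈ Finset.univ, 0 ≤ (toSimplex x k - toSimplex a k) ^ 2 :=
    fun k _ => sq_nonneg _
  rw [← le_sqrt (norm_nonneg _) (Finset.sum_nonneg hnonneg),
    pi_norm_le_iff_of_nonneg (sqrt_nonneg _)]
  intro k
  refine abs_le_sqrt ?_
  simpa using Finset.single_le_sum hnonneg (Finset.mem_univ k.castSucc)

lemma relEnt_toSimplex_isBigO {a : Fin d → ℝ} (ha : a ∈ interior (solidSimplex d)) :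
    (fun x => relEnt (toSimplex x) (toSimplex a)) =O[𝓝[solidSimplex d] a]
      fun x => ‖x - a‖ ^ 2 := by
  have hρ := toSimplex_pos_of_mem_interior ha
  have hρmem := mapsTo_toSimplex (interior_subset ha)
  have hchi : (fun x => ∑ k, (toSimplex x k - toSimplex a k) ^ 2 / toSimplex a k) =O[𝓝 a]
      fun x => ‖x - a‖ ^ 2 := by
    refine .fun_sum fun k _ => ?_
    have hcoord : (fun x => toSimplex x k - toSimplex a k) =O[𝓝 a] fun x => ‖x - a‖ :=
      ((contDiff_pi.1 contDiff_toSimplex k).differentiable one_ne_zero a).isBigO_sub.norm_right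
    simpa only [div_eq_inv_mul] using (hcoord.pow 2).const_mul_left (toSimplex a k)⁻¹
  refine IsBigO.trans (.of_bound 1 ?_) (hchi.mono nhdsWithin_le_nhds)
  filter_upwards [self_mem_nhdsWithin] with x hx
  have hm := mapsTo_toSimplex hx
  have hle := relEnt_le_sum_sq_div hm hρ hρmem.2
  rw [one_mul, norm_of_nonneg (relEnt_nonneg_of_pos hm hρ hρmem.2)]
  exact hle.trans (le_abs_self _)

lemma contDiffAt_comp_toSimplex {n : WithTop ℕ∞} {F : (Fin (d + 1) → ℝ) → ℝ}
    (hF : ContDiffOn ℝ n F (stdSimplex ℝ (Fin (d + 1)))) {a : Fin d → ℝ}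
    (ha : a ∈ interior (solidSimplex d)) : ContDiffAt ℝ n (fun x => F (toSimplex x)) a :=
  (hF.comp contDiff_toSimplex.contDiffOn mapsTo_toSimplex).contDiffAt
    (mem_interior_iff_mem_nhds.1 ha)

lemma contDiffAt_freeEntropy_toSimplex {F : (Fin (d + 1) → ℝ) → ℝ} {a : Fin d → ℝ}
    (ha : a ∈ interior (solidSimplex d)) (hF : ContDiffAt ℝ 2 (fun x => F (toSimplex x)) a) :
    ContDiffAt ℝ 2 (fun x => freeEntropy F (toSimplex x)) a := by
  refine hF.add (ContDiffAt.sum fun k _ => ?_)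
  have hcoord : ContDiffAt ℝ 2 (fun x => toSimplex x k) a :=
    (contDiff_pi.1 contDiff_toSimplex k).contDiffAt
  exact hcoord.neg.mul (hcoord.log (toSimplex_pos_of_mem_interior ha k).ne')

lemma exists_relEnergy_le {F : (Fin (d + 1) → ℝ) → ℝ}
    (hFcont : ContinuousOn F (stdSimplex ℝ (Fin (d + 1)))) {a : Fin d → ℝ}
    (ha : a ∈ interior (solidSimplex d)) (hF : ContDiffAt ℝ 2 (fun x => F (toSimplex x)) a)
    (hmax : ∀ x ∈ solidSimplex d, x ≠ a →
      freeEntropy F (toSimplex x) < freeEntropy F (toSimplex a))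
    (hHess : ∀ v, v ≠ 0 →
      fderiv ℝ (fderiv ℝ fun x => freeEntropy F (toSimplex x)) a v v ≠ 0) :
    ∃ c > 0, ∀ m ∈ stdSimplex ℝ (Fin (d + 1)),
      relEnergy F (toSimplex a) m ≤ (1 - c) * relEnt m (toSimplex a) := by
  set G : (Fin d → ℝ) → ℝ := fun x => freeEntropy F (toSimplex x)
  have hρ := toSimplex_pos_of_mem_interior ha
  have hchart : ContinuousOn toSimplex (solidSimplex d) :=
    (contDiff_toSimplex (n := 0)).continuous.continuousOn
  have hGcont : ContinuousOn G (solidSimplex d) :=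
    (continuousOn_freeEntropy hFcont).comp hchart mapsTo_toSimplex
  have hlocal : IsLocalMax G a := by
    filter_upwards [mem_interior_iff_mem_nhds.1 ha] with x hx
    rcases eq_or_ne x a with rfl | hxa
    exacts [le_rfl, (hmax x hx hxa).le]
  have hquad : (fun x => ‖x - a‖ ^ 2) =O[𝓝[solidSimplex d] a] fun x => G a - G x :=
    (sq_norm_isBigO_of_isLocalMax (contDiffAt_freeEntropy_toSimplex ha hF) hlocal hHess).mono
      nhdsWithin_le_nhds
  have hrelEnt : (fun x => relEnt (toSimplex x) (toSimplex a)) =O[𝓟 (solidSimplex d)]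
      fun x => G a - G x :=
    isBigO_principal_of_isBigO_nhdsWithin isCompact_solidSimplex
      ((continuous_relEnt_left hρ).comp_continuousOn hchart) (continuousOn_const.sub hGcont)
      (fun x hx hxa => (sub_pos.2 (hmax x hx hxa)).ne') ((relEnt_toSimplex_isBigO ha).trans hquad)
  obtain ⟨D, hD, hbound⟩ := hrelEnt.exists_pos
  refine ⟨1 / D, by positivity, fun m hm => ?_⟩
  obtain ⟨x, hx, rfl⟩ := surjOn_toSimplex hm
  have hgap : 0 ≤ G a - G x := by
    rcases eq_or_ne x a with rfl | hxa
    exacts [(sub_self _).ge, (sub_pos.2 (hmax x hx hxa)).le]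
  have hle := (le_abs_self _).trans (isBigOWith_principal.1 hbound x hx)
  rw [norm_of_nonneg hgap, ← div_le_iff₀' hD] at hle
  rw [relEnergy_eq_freeEntropy_sub_add_relEnt F _ hρ, sub_mul, one_mul, one_div_mul_eq_div]
  linarith

lemma exists_le_relEnergy {F : (Fin (d + 1) → ℝ) → ℝ}
    (hFcont : ContinuousOn F (stdSimplex ℝ (Fin (d + 1)))) {a : Fin d → ℝ}
    (hF : ContDiffAt ℝ 2 (fun x => F (toSimplex x)) a) :
    ∃ b ≥ 0, ∃ g : Fin (d + 1) → ℝ, ∀ m ∈ stdSimplex ℝ (Fin (d + 1)),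
      ∑ k, (m k - toSimplex a k) * g k - b * ∑ k, (m k - toSimplex a k) ^ 2 ≤
        relEnergy F (toSimplex a) m := by
  set L := fderiv ℝ (fun x => F (toSimplex x)) a
  have hrem : (fun x => F (toSimplex x) - F (toSimplex a) - L (x - a)) =O[𝓟 (solidSimplex d)]
      fun x => ‖x - a‖ ^ 2 := by
    have hcont : ContinuousOn (fun x => F (toSimplex x)) (solidSimplex d) :=
      hFcont.comp (contDiff_toSimplex (n := 0)).continuous.continuousOn mapsTo_toSimplex
    refine isBigO_principal_of_isBigO_nhdsWithin isCompact_solidSimplex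
      ((hcont.sub continuousOn_const).sub (by fun_prop)) (by fun_prop) (fun x _ hxa => ?_)
      ((sub_sub_fderiv_isBigO_sq hF).mono nhdsWithin_le_nhds)
    simpa [sub_eq_zero] using hxa
  obtain ⟨b, hb, hbound⟩ := hrem.exists_pos
  refine ⟨b, hb.le, fun k => Fin.snoc (α := fun _ => ℝ) (fun k => L (Pi.single k 1)) 0 k -
    log (toSimplex a k), fun m hm => ?_⟩
  obtain ⟨x, hx, rfl⟩ := surjOn_toSimplex hm
  have hlinear : ∑ k, (toSimplex x k - toSimplex a k) *
      Fin.snoc (α := fun _ => ℝ) (fun k => L (Pi.single k 1)) 0 k = L (x - a) := by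
    conv_rhs => rw [pi_eq_sum_univ' (x - a)]
    simp [Fin.sum_univ_castSucc]
  have hlower := (abs_le.1 (isBigOWith_principal.1 hbound x hx)).1
  rw [norm_of_nonneg (sq_nonneg _)] at hlower
  have hnorm := mul_le_mul_of_nonneg_left (sq_norm_sub_le_sum_sq_toSimplex_sub x a) hb.le
  simp only [relEnergy, mul_sub, Finset.sum_sub_distrib, hlinear]
  linarith

theorem stmt_4_general {F : (Fin (d + 1) → ℝ) → ℝ}
    (hFcont : ContinuousOn F (stdSimplex ℝ (Fin (d + 1)))) {a : Fin d → ℝ}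
    (ha : a ∈ interior (solidSimplex d)) (hF : ContDiffAt ℝ 2 (fun x => F (toSimplex x)) a)
    (hmax : ∀ x ∈ solidSimplex d, x ≠ a →
      freeEntropy F (toSimplex x) < freeEntropy F (toSimplex a))
    (hHess : ∀ v, v ≠ 0 →
      fderiv ℝ (fderiv ℝ fun x => freeEntropy F (toSimplex x)) a v v ≠ 0) :
    ∃ c > 0, ∀ {N k : ℕ}, 1 ≤ k → ∀ hk : k ≤ N,
      relEnt (marginal (Fin.castLE hk) (gibbsMeasure F N)) (fun τ => ∏ j, toSimplex a (τ j)) ≤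
        c * k / N := by
  have hρ := toSimplex_pos_of_mem_interior ha
  have hρ₁ := (mapsTo_toSimplex (interior_subset ha)).2
  obtain ⟨c, hc, hup⟩ := exists_relEnergy_le hFcont ha hF hmax hHess
  obtain ⟨b, hb, g, hlow⟩ := exists_le_relEnergy hFcont hF
  obtain ⟨C, hC⟩ := exists_relEnt_gibbsMeasure_le hρ hρ₁ hc hup hb g hlow
  refine ⟨2 * (|C| + 1), by positivity, fun {N k} hk₀ hk => ?_⟩
  calc relEnt (marginal (Fin.castLE hk) (gibbsMeasure F N)) (fun τ => ∏ j, toSimplex a (τ j))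
      ≤ 2 * (k / N) * relEnt (gibbsMeasure F N) (fun σ => ∏ i, toSimplex a (σ i)) :=
        relEnt_marginal_castLE_le hk₀ hk (gibbsMeasure_mem_stdSimplex F N)
          (gibbsMeasure_comp_perm F) hρ hρ₁
    _ ≤ 2 * (k / N) * (|C| + 1) := by
        gcongr
        exact (hC (by omega)).trans ((le_abs_self C).trans (le_add_of_nonneg_right zero_le_one))
    _ = 2 * (|C| + 1) * k / N := by ring

end ReducedCoordinates

/-- Assume (A) and (B) hold with `p = 1`, i.e. `G` has a unique
non-degenerate global maximizer `M = M_1` in the interior of `Δ̂`. With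
`ρ(l) = M_{1,l}` on `{1,…,q}`, there is a constant `c > 0` such that for all `N`
and all `1 ≤ k ≤ N` the `k`-marginal of the Gibbs measure satisfies
`H(μ_N^{(k)} | ρ^{⊗k}) ≤ c k / N`. Here `q = d + 1`, `d ≥ 1`. -/
theorem stmt_4
    (d : ℕ) (hd : 1 ≤ d)
    (F : (Fin (d + 1) → ℝ) → ℝ)
    (hF : ContDiffOn ℝ 2 F {m : Fin (d + 1) → ℝ | (∀ k, 0 ≤ m k) ∧ ∑ k, m k = 1})
    (ent : (Fin (d + 1) → ℝ) → ℝ)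
    (hent : ∀ m, ent m = -∑ k, m k * Real.log (m k))
    (G : (Fin d → ℝ) → ℝ)
    (hG : ∀ x : Fin d → ℝ,
      G x = F (Fin.snoc x (1 - ∑ k, x k)) + ent (Fin.snoc x (1 - ∑ k, x k)))
    (Δhat : Set (Fin d → ℝ))
    (hΔhat : Δhat = {x : Fin d → ℝ | (∀ k, 0 ≤ x k) ∧ ∑ k, x k ≤ 1})
    -- (A): the global maximizers of `G` on `Δ̂` are exactly the `p` distinct points
    -- `M 1, …, M p`, all lying in the interior of `Δ̂`
    (M : Fin 1 → Fin d → ℝ)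
        (hMint : ∀ j, M j ∈ interior Δhat)
    (hMmax : ∀ j, ∀ x ∈ Δhat, G x ≤ G (M j))
    (hMonly : ∀ x ∈ Δhat, (∀ y ∈ Δhat, G y ≤ G x) → ∃ j, x = M j)
    -- (B): `H_j = -Hess G (M_j)` is positive definite
    (H : Fin 1 → Matrix (Fin d) (Fin d) ℝ)
    (hH : ∀ j k l, H j k l =
      -(fderiv ℝ (fun x => fderiv ℝ G x (Pi.single l 1)) (M j)) (Pi.single k 1))
    (hHpd : ∀ j, (H j).PosDef)
    (Mfull : Fin 1 → Fin (d + 1) → ℝ)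
    (hMfull : ∀ j, Mfull j = Fin.snoc (M j) (1 - ∑ k, M j k))
    (w : Fin 1 → ℝ)
    (hw : ∀ j, w j = (Real.sqrt ((H j).det * ∏ k, Mfull j k))⁻¹)
    (Z : ℕ → ℝ)
    (hZ : ∀ N : ℕ, Z N = ∑ σ : Fin N → Fin (d + 1),
      Real.exp ((N : ℝ) * F (fun k => ((Finset.univ.filter fun i => σ i = k).card : ℝ) / N)))
    (μ : ∀ N : ℕ, (Fin N → Fin (d + 1)) → ℝ)
    (hμ : ∀ N σ, μ N σ =
      Real.exp ((N : ℝ) * F (fun k => ((Finset.univ.filter fun i => σ i = k).card : ℝ) / N)) / Z N) :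
    ∃ c > (0 : ℝ), ∀ N : ℕ, ∀ k : ℕ, 1 ≤ k → ∀ hk : k ≤ N,
      relEnt
        (fun τ : Fin k → Fin (d + 1) => ∑ σ : Fin N → Fin (d + 1),
          if ∀ i : Fin k, σ (Fin.castLE hk i) = τ i then μ N σ else 0)
        (fun τ : Fin k → Fin (d + 1) => ∏ i, Mfull 0 (τ i)) ≤ c * k / N := by
  obtain rfl : Δhat = solidSimplex d := hΔhat
  obtain rfl : G = fun x => freeEntropy F (toSimplex x) := funext fun x => by
    simp [hG, hent, freeEntropy, negMulLog, toSimplex]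
  have hmax : ∀ x ∈ solidSimplex d, x ≠ M 0 →
      freeEntropy F (toSimplex x) < freeEntropy F (toSimplex (M 0)) := fun x hx hne => by
    refine lt_of_le_of_ne (hMmax 0 x hx) fun heq => hne ?_
    obtain ⟨j, hj⟩ := hMonly x hx fun y hy => (hMmax 0 y hy).trans_eq heq.symm
    rw [hj, Subsingleton.elim j 0]
  have hFM := contDiffAt_comp_toSimplex hF (hMint 0)
  have hHess : ∀ v, v ≠ 0 →
      fderiv ℝ (fderiv ℝ fun x => freeEntropy F (toSimplex x)) (M 0) v v ≠ 0 := fun v hv =>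
    (fderiv_fderiv_apply_self_neg_of_posDef (differentiableAt_fderiv_of_contDiffAt
      (contDiffAt_freeEntropy_toSimplex (hMint 0) hFM)) (hH 0) (hHpd 0) hv).ne
  obtain ⟨c, hc, hbound⟩ := stmt_4_general hF.continuousOn (hMint 0) hFM hmax hHess
  have hgibbs : ∀ N, μ N = gibbsMeasure F N := fun N => funext fun σ => by
    rw [hμ, hZ]
    rfl
  refine ⟨c, hc, fun N k hk₀ hk => ?_⟩
  simp only [← marginal_apply, hgibbs, hMfull]
  exact hbound hk₀ hk
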